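/- Declaring a sieve S on an enclosure E to be a covering sieve if and only if S contains a finite family of morphisms Eᵢ → E in Enc whose images cover E defines a Grothendieck topology on the category Enc. -/

import Mathlib

open scoped BigOperators

/-- The standard Cartan plane of type A₂: `{x ∈ ℝ³ : x₁ + x₂ + x₃ = 0}`. -/
abbrev Cartan : Type := {x : Fin 3 → ℝ // ∑ i, x i = 0}

/-- The root half-space `{x : xᵢ − xⱼ ≥ c}`. -/
def RootHalfSpace (i j : Fin 3) (c : ℝ) : Set Cartan := {x | c ≤ x.1 i - x.1 j}

/-- The root hyperplane `{x : xᵢ − xⱼ = c}`. -/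
def RootHyperplane (i j : Fin 3) (c : ℝ) : Set Cartan := {x | x.1 i - x.1 j = c}

/-- An enclosure: a bounded subset of the Cartan plane which is an intersection of
finitely many root half-spaces. -/
def IsEnclosure (E : Set Cartan) : Prop :=
  Bornology.IsBounded E ∧
  ∃ s : Finset (Fin 3 × Fin 3 × ℝ),
    (∀ p ∈ s, p.1 ≠ p.2.1) ∧
    E = ⋂ p ∈ s, RootHalfSpace p.1 p.2.1 p.2.2

/-- An element of the affine Weyl group: `x ↦ σ·x + v` with `σ ∈ S₃` permuting
coordinates and `v` in the Cartan plane. -/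
def IsAffWeyl (g : Cartan → Cartan) : Prop :=
  ∃ (σ : Equiv.Perm (Fin 3)) (v : Cartan),
    ∀ (x : Cartan) (i : Fin 3), (g x).1 i = x.1 (σ i) + v.1 i

theorem isAffWeyl_id : IsAffWeyl (fun x => x) := by
  refine ⟨Equiv.refl _, ⟨fun _ => 0, by simp⟩, ?_⟩
  intro x i
  simp

theorem IsAffWeyl.comp {g₂ g₁ : Cartan → Cartan} (h₂ : IsAffWeyl g₂) (h₁ : IsAffWeyl g₁) :
    IsAffWeyl (fun x => g₂ (g₁ x)) := by
  obtain ⟨σ₂, v₂, hh₂⟩ := h₂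
  obtain ⟨σ₁, v₁, hh₁⟩ := h₁
  refine ⟨σ₂.trans σ₁, ⟨fun i => v₁.1 (σ₂ i) + v₂.1 i, ?_⟩, ?_⟩
  · rw [Finset.sum_add_distrib, Equiv.sum_comp σ₂ v₁.1, v₁.2, v₂.2, add_zero]
  · intro x i
    rw [hh₂, hh₁]
    simp [Equiv.trans_apply]
    ring

open CategoryTheory

/-- The category `Enc` of enclosures. -/
structure Enc : Type where
  /-- the underlying subset of the Cartan plane -/
  carrier : Set Cartan
  isEnclosure : IsEnclosure carrier

/-- Morphisms of enclosures are restrictions of affine Weyl group elements. -/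
instance : Category Enc where
  Hom E F := {f : E.carrier → F.carrier //
    ∃ g : Cartan → Cartan, IsAffWeyl g ∧ ∀ x : E.carrier, (f x : Cartan) = g x}
  id E := ⟨fun x => x, ⟨fun y => y, isAffWeyl_id, fun _ => rfl⟩⟩
  comp {E F G} f g := ⟨fun x => g.1 (f.1 x), by
    obtain ⟨gf, hgf, hf⟩ := f.2
    obtain ⟨gg, hgg, hg⟩ := g.2
    exact ⟨fun x => gg (gf x), hgg.comp hgf, fun x => by rw [hg, hf]⟩⟩

/-- A sieve on an enclosure `E` contains a covering: a finite family of morphisms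
`Eᵢ → E` in `Enc`, belonging to the sieve, whose images cover `E`. -/
def ContainsCovering (E : Enc) (S : CategoryTheory.Sieve E) : Prop :=
  ∃ (n : ℕ) (F : Fin n → Enc) (f : ∀ i, F i ⟶ E),
    (∀ i, S.arrows (f i)) ∧ ∀ x : E.carrier, ∃ (i : Fin n) (y : (F i).carrier), (f i).1 y = x

theorem IsAffWeyl.exists_inv {g : Cartan → Cartan} (h : IsAffWeyl g) :
    ∃ g' : Cartan → Cartan, IsAffWeyl g' ∧ (∀ x, g (g' x) = x) ∧ ∀ x, g' (g x) = x := by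
  obtain ⟨σ, v, hg⟩ := h
  have hsum : ∀ x : Cartan, ∑ i, (x.1 (σ.symm i) + -v.1 (σ.symm i)) = 0 := by
    intro x
    rw [Equiv.sum_comp σ.symm (fun i => x.1 i + -v.1 i), Finset.sum_add_distrib,
      Finset.sum_neg_distrib, x.2, v.2]
    simp
  refine ⟨fun x => ⟨fun i => x.1 (σ.symm i) + -v.1 (σ.symm i), hsum x⟩,
    ⟨σ.symm, ⟨fun i => -v.1 (σ.symm i), ?_⟩, fun x i => rfl⟩, ?_, ?_⟩
  · rw [Equiv.sum_comp σ.symm (fun i => -v.1 i), Finset.sum_neg_distrib, v.2, neg_zero]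
  · intro x
    apply Subtype.ext
    funext i
    rw [hg]
    simp
  · intro x
    apply Subtype.ext
    funext i
    simp [hg]

/-- Intersecting an enclosure with the preimage of an enclosure gives an enclosure. -/
theorem IsEnclosure.inter_preimage {A B : Set Cartan} (hA : IsEnclosure A) (hB : IsEnclosure B)
    {g : Cartan → Cartan} (h : IsAffWeyl g) : IsEnclosure (A ∩ g ⁻¹' B) := by
  classical
  obtain ⟨hbd, s, hs, rfl⟩ := hA
  obtain ⟨-, t, ht, rfl⟩ := hB
  obtain ⟨σ, v, hg⟩ := h
  refine ⟨hbd.subset Set.inter_subset_left,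
    s ∪ t.image (fun p => (σ p.1, σ p.2.1, p.2.2 - v.1 p.1 + v.1 p.2.1)), ?_, ?_⟩
  · intro p hp
    rcases Finset.mem_union.1 hp with hp | hp
    · exact hs p hp
    · obtain ⟨q, hq, rfl⟩ := Finset.mem_image.1 hp
      exact fun e => ht q hq (σ.injective e)
  · have key : ∀ (x : Cartan) (p : Fin 3 × Fin 3 × ℝ),
        g x ∈ RootHalfSpace p.1 p.2.1 p.2.2 ↔
        x ∈ RootHalfSpace (σ p.1) (σ p.2.1) (p.2.2 - v.1 p.1 + v.1 p.2.1) := by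
      intro x p
      simp only [RootHalfSpace, Set.mem_ofPred_eq, hg]
      constructor <;> intro h <;> linarith
    ext x
    simp only [Set.mem_inter_iff, Set.mem_preimage, Set.mem_iInter, key]
    constructor
    · rintro ⟨h1, h2⟩ p hp
      rcases Finset.mem_union.1 hp with hp | hp
      · exact h1 p hp
      · obtain ⟨q, hq, rfl⟩ := Finset.mem_image.1 hp
        exact h2 q hq
    · intro h
      exact ⟨fun p hp => h p (Finset.mem_union_left _ hp), fun q hq =>
        h _ (Finset.mem_union_right _ (Finset.mem_image_of_mem _ hq))⟩

theorem ContainsCovering.of_finite {E : Enc} {S : Sieve E} {ι : Type} [Finite ι]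
    (F : ι → Enc) (f : ∀ i, F i ⟶ E) (hf : ∀ i, S.arrows (f i))
    (hc : ∀ x : E.carrier, ∃ (i : ι) (y : (F i).carrier), (f i).1 y = x) :
    ContainsCovering E S := by
  obtain ⟨n, ⟨e⟩⟩ := Finite.exists_equiv_fin ι
  refine ⟨n, fun k => F (e.symm k), fun k => f (e.symm k), fun k => hf _, fun x => ?_⟩
  obtain ⟨i, y, hy⟩ := hc x
  obtain ⟨k, rfl⟩ := e.symm.surjective i
  exact ⟨k, y, hy⟩

theorem ContainsCovering.pullback {E E' : Enc} {S : Sieve E} (hS : ContainsCovering E S)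
    (h : E' ⟶ E) : ContainsCovering E' (S.pullback h) := by
  obtain ⟨n, F, f, hf, hc⟩ := hS
  obtain ⟨a, ha, hha⟩ := h.2
  choose b hb hfb using fun i => (f i).2
  choose b' hb' hbb' hb'b using fun i => (hb i).exists_inv
  let K : Fin n → Enc := fun i => ⟨E'.carrier ∩ (fun x => b' i (a x)) ⁻¹' (F i).carrier,
    E'.isEnclosure.inter_preimage (F i).isEnclosure ((hb' i).comp ha)⟩
  let k : ∀ i, K i ⟶ E' := fun i => ⟨fun x => ⟨x.1, x.2.1⟩, fun x => x, isAffWeyl_id, fun _ => rfl⟩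
  let l : ∀ i, K i ⟶ F i := fun i =>
    ⟨fun x => ⟨b' i (a x.1), x.2.2⟩, fun x => b' i (a x), (hb' i).comp ha, fun _ => rfl⟩
  refine ⟨n, K, k, fun i => ?_, fun x => ?_⟩
  · have e : k i ≫ h = l i ≫ f i := by
      apply Subtype.ext
      funext x
      apply Subtype.ext
      change (h.1 ((k i).1 x)).1 = ((f i).1 ((l i).1 x)).1
      rw [hha, hfb]
      exact (hbb' i (a x.1)).symm
    change S.arrows (k i ≫ h)
    rw [e]
    exact S.downward_closed (hf i) (l i)
  · obtain ⟨i, y, hy⟩ := hc (h.1 x)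
    refine ⟨i, ⟨x.1, x.2, ?_⟩, rfl⟩
    have e : b i y.1 = a x.1 := by rw [← hfb, hy, hha]
    change b' i (a x.1) ∈ (F i).carrier
    rw [← e, hb'b]
    exact y.2

theorem ContainsCovering.trans {E : Enc} {S R : Sieve E} (hS : ContainsCovering E S)
    (hR : ∀ ⦃E' : Enc⦄ ⦃f : E' ⟶ E⦄, S.arrows f → ContainsCovering E' (R.pullback f)) :
    ContainsCovering E R := by
  obtain ⟨n, F, f, hf, hc⟩ := hS
  choose m G g hg hgc using fun i => hR (hf i)
  refine ContainsCovering.of_finite (ι := Σ i : Fin n, Fin (m i)) (fun p => G p.1 p.2)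
    (fun p => g p.1 p.2 ≫ f p.1) (fun p => hg p.1 p.2) fun x => ?_
  obtain ⟨i, y, hy⟩ := hc x
  obtain ⟨j, z, hz⟩ := hgc i y
  refine ⟨⟨i, j⟩, z, ?_⟩
  change (f i).1 ((g i j).1 z) = x
  rw [hz, hy]

/-- Declaring a sieve on an enclosure `E` to be a covering sieve iff it
contains a finite family of morphisms `Eᵢ → E` in `Enc` whose images cover `E` defines a
Grothendieck topology on `Enc`. -/
theorem enc_grothendieckTopology :
    ∃ J : CategoryTheory.GrothendieckTopology Enc,
      ∀ (E : Enc) (S : CategoryTheory.Sieve E), S ∈ J.sieves E ↔ ContainsCovering E S := by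
  refine ⟨{ sieves := fun E => {S | ContainsCovering E S}
            top_mem' := fun E => ?_
            pullback_stable' := fun E E' S h hS => ContainsCovering.pullback hS h
            transitive' := fun E S hS R hR => ContainsCovering.trans hS hR }, fun E S => Iff.rfl⟩
  exact ⟨1, fun _ => E, fun _ => 𝟙 E, fun _ => trivial, fun x => ⟨0, x, rfl⟩⟩
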